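/- For every complex number q with 0 < |q| < 1 and every nonzero complex number z, one has ∑_{i,j,k,l ≥ 0} z^{i−j} q^{i²+j²+k²+l²−il−jl−kl} / ((q²;q²)_i (q²;q²)_j (q²;q²)_k (q²;q²)_l) = J_2³ · (−q/z, −qz; q²)_∞ · (−q²z, −q²/z; q⁴)_∞ / (J_1² J_4) + 2q · J_4³ · (−1/z, −q²z; q²)_∞ · (−z, −q⁴/z; q⁴)_∞ / J_2³. (Taking z = q^b recovers the identity for the Nahm sum F(q^b, q^{−b}, 1, 1; q²) for any rational b.) -/

import Mathlib

open scoped BigOperators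

/-- The infinite q-Pochhammer symbol `(a; q)_∞ = ∏_{k=0}^∞ (1 - a q^k)`. -/
noncomputable def qPochInf (a q : ℂ) : ℂ := ∏' n : ℕ, (1 - a * q ^ n)

/-- The finite q-Pochhammer symbol `(a; q)_n = ∏_{k=0}^{n-1} (1 - a q^k)`. -/
noncomputable def qPoch (a q : ℂ) (n : ℕ) : ℂ :=
  Finset.prod (Finset.range n) (fun k => 1 - a * q ^ k)

/-- `J_m = (q^m; q^m)_∞`. -/
noncomputable def J (q : ℂ) (m : ℕ) : ℂ := qPochInf (q ^ m) (q ^ m)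

/-- `J_{a,m} = (q^a; q^m)_∞ (q^{m-a}; q^m)_∞ (q^m; q^m)_∞`. -/
noncomputable def Jam (q : ℂ) (a m : ℕ) : ℂ :=
  qPochInf (q ^ a) (q ^ m) * qPochInf (q ^ (m - a)) (q ^ m) * qPochInf (q ^ m) (q ^ m)

/-!
For fixed `l`, Euler's theorem sums the series over `i`, `j` and `k`, and leaves the product of
`(-z q^(1-l); q²)_∞`, `(-q^(1-l) / z; q²)_∞` and `(-q^(1-l); q²)_∞`. Reversing the factors that a
shift by a power of `q²` adds, `(a / q^n; q)_∞ = (-a)^n q^(-n(n+1)/2) (q / a; q)_n (a; q)_∞`, turns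
the terms with even `l` into Andrews' `q`-analogue of Bailey's theorem and those with odd `l` into
his `q`-analogue of Gauss's second theorem. Like Euler's theorem, both follow by iterating a
functional equation in one parameter down to the value `0` of that parameter; the functional
equation itself holds because the difference of its two sides telescopes.
-/

open Filter Finset Topology

variable {a b c d q z : ℂ}

section Preliminaries

theorem two_mul_choose_two_add_self (n : ℕ) : 2 * n.choose 2 + n = n ^ 2 := by
  induction n with
  | zero => rfl
  | succ n ih => rw [Nat.choose_succ_succ' n 1, Nat.choose_one_right]; linarith

theorem pow_succ_choose_two {M : Type*} [Monoid M] (x : M) (n : ℕ) :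
    x ^ (n + 1).choose 2 = x ^ n.choose 2 * x ^ n := by
  rw [Nat.choose_succ_succ' n 1, Nat.choose_one_right, pow_add, pow_mul_comm]

theorem summable_pow_mul_pow_choose_two {M r : ℝ} (hM : 0 ≤ M) (hr₀ : 0 ≤ r) (hr₁ : r < 1) :
    Summable fun n : ℕ => M ^ n * r ^ n.choose 2 := by
  have ratio_tendsto : Tendsto (fun n : ℕ => M * r ^ n) atTop (𝓝 0) := by
    simpa using (tendsto_pow_atTop_nhds_zero_of_lt_one hr₀ hr₁).const_mul M
  refine summable_of_ratio_norm_eventually_le (r := 1 / 2) (by norm_num) ?_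
  filter_upwards [ratio_tendsto.eventually_le_const (show (0 : ℝ) < 1 / 2 by norm_num)] with n hn
  rw [Real.norm_of_nonneg (by positivity), Real.norm_of_nonneg (by positivity),
    pow_succ_choose_two]
  calc M ^ (n + 1) * (r ^ n.choose 2 * r ^ n) = M * r ^ n * (M ^ n * r ^ n.choose 2) := by ring
    _ ≤ 1 / 2 * (M ^ n * r ^ n.choose 2) := by gcongr

theorem tendsto_pow_mul_pow_choose_two (x : ℂ) (hq : ‖q‖ < 1) :
    Tendsto (fun n : ℕ => x ^ n * q ^ n.choose 2) atTop (𝓝 0) := by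
  refine (Summable.of_norm ?_).tendsto_atTop_zero
  simpa using summable_pow_mul_pow_choose_two (norm_nonneg x) (norm_nonneg q) hq

theorem tsum_eq_zero_of_telescoping {G : Type*} [AddCommGroup G] [TopologicalSpace G] [T2Space G]
    {f g : ℕ → G} (hf : Summable f) (zero : f 0 = g 0) (succ : ∀ n, f (n + 1) = g (n + 1) - g n)
    (hg : Tendsto g atTop (𝓝 0)) : ∑' n, f n = 0 := by
  have partial_sum (n : ℕ) : ∑ i ∈ range (n + 1), f i = g n := by
    induction n with
    | zero => simpa using zero
    | succ n ih => rw [sum_range_succ, ih, succ, add_sub_cancel]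
  have hlim := (tendsto_add_atTop_iff_nat 1).2 hf.hasSum.tendsto_sum_nat
  simp only [partial_sum] at hlim
  exact tendsto_nhds_unique hlim hg

theorem eq_mul_of_tendsto_prod {M : Type*} [CommMonoid M] [TopologicalSpace M] [ContinuousMul M]
    [T2Space M] {u α : ℕ → M} {A L : M} (hu : ∀ n, u n = α n * u (n + 1))
    (hα : Tendsto (fun n => ∏ k ∈ range n, α k) atTop (𝓝 A)) (hL : Tendsto u atTop (𝓝 L)) :
    u 0 = A * L := by
  have iterate (n : ℕ) : u 0 = (∏ k ∈ range n, α k) * u n := by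
    induction n with
    | zero => simp
    | succ n ih => rw [ih, hu n, prod_range_succ, mul_assoc]
  exact tendsto_nhds_unique (tendsto_const_nhds.congr iterate) (hα.mul hL)

theorem norm_pow_lt_one (hq : ‖q‖ < 1) {m : ℕ} (hm : m ≠ 0) : ‖q ^ m‖ < 1 := by
  simpa using pow_lt_one₀ (norm_nonneg q) hq hm

theorem norm_mul_pow_le (a : ℂ) (hq : ‖q‖ ≤ 1) (n : ℕ) : ‖a * q ^ n‖ ≤ ‖a‖ := by
  rw [norm_mul, norm_pow]
  exact mul_le_of_le_one_right (norm_nonneg a) (pow_le_one₀ (norm_nonneg q) hq)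

theorem mul_pow_ne_one (ha : ‖a‖ < 1) (hq : ‖q‖ < 1) (n : ℕ) : a * q ^ n ≠ 1 := by
  intro h
  simpa [h] using (norm_mul_pow_le a hq.le n).trans_lt ha

theorem tsum_eq_mul_tsum_zero_of_functional_equation {F : ℂ → ℕ → ℂ} {α : ℕ → ℂ} {A p : ℂ}
    {B : ℕ → ℝ} (hp : ‖p‖ < 1) (hF : ∀ n, ContinuousAt (fun a => F a n) 0)
    (hFB : ∀ k n, ‖F (a * p ^ k) n‖ ≤ B n) (hB : Summable B)
    (hFα : ∀ k, ∑' n, F (a * p ^ k) n = α k * ∑' n, F (a * p ^ (k + 1)) n)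
    (hα : Tendsto (fun n => ∏ k ∈ range n, α k) atTop (𝓝 A)) :
    ∑' n, F a n = A * ∑' n, F 0 n := by
  have base_tendsto : Tendsto (fun k : ℕ => a * p ^ k) atTop (𝓝 0) := by
    simpa using (tendsto_pow_atTop_nhds_zero_of_norm_lt_one hp).const_mul a
  have series_tendsto : Tendsto (fun k => ∑' n, F (a * p ^ k) n) atTop (𝓝 (∑' n, F 0 n)) :=
    tendsto_tsum_of_dominated_convergence hB (fun n => (hF n).tendsto.comp base_tendsto)
      (.of_forall hFB)
  simpa using eq_mul_of_tendsto_prod hFα hα series_tendsto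

end Preliminaries

section FiniteProducts

theorem qPoch_succ (a q : ℂ) (n : ℕ) : qPoch a q (n + 1) = qPoch a q n * (1 - a * q ^ n) :=
  prod_range_succ _ _

theorem qPoch_succ' (a q : ℂ) (n : ℕ) : qPoch a q (n + 1) = (1 - a) * qPoch (a * q) q n := by
  simp only [qPoch, prod_range_succ', pow_zero, mul_one, pow_succ', mul_assoc,
    mul_comm _ (1 - a)]

@[simp]
theorem qPoch_zero_right (a q : ℂ) : qPoch a q 0 = 1 := prod_range_zero _

@[simp]
theorem qPoch_zero_left (q : ℂ) (n : ℕ) : qPoch 0 q n = 1 := by simp [qPoch]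

theorem qPoch_add (a q : ℂ) (m n : ℕ) :
    qPoch a q (m + n) = qPoch a q m * qPoch (a * q ^ m) q n := by
  simp only [qPoch, prod_range_add, pow_add, mul_assoc]

theorem qPoch_two_mul (a q : ℂ) (n : ℕ) :
    qPoch a q (2 * n) = qPoch a (q ^ 2) n * qPoch (a * q) (q ^ 2) n := by
  induction n with
  | zero => simp
  | succ n ih => rw [mul_add_one, qPoch_succ _ _ (2 * n + 1), qPoch_succ, ih, qPoch_succ,
      qPoch_succ]; ring

theorem qPoch_mul_qPoch_neg (a q : ℂ) (n : ℕ) :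
    qPoch a q n * qPoch (-a) q n = qPoch (a ^ 2) (q ^ 2) n := by
  simp only [qPoch, ← prod_mul_distrib]
  exact prod_congr rfl fun k _ => by ring

theorem qPoch_ne_zero (ha : ∀ n : ℕ, a * q ^ n ≠ 1) (n : ℕ) : qPoch a q n ≠ 0 :=
  prod_ne_zero_iff.2 fun k _ => sub_ne_zero.2 (ha k).symm

theorem continuous_qPoch (q : ℂ) (n : ℕ) : Continuous fun a => qPoch a q n := by
  unfold qPoch
  fun_prop

theorem qPoch_div_pow (hq : q ≠ 0) (ha : a ≠ 0) (n : ℕ) :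
    qPoch (a / q ^ n) q n = (-a) ^ n / q ^ (n + 1).choose 2 * qPoch (q / a) q n := by
  induction n with
  | zero => simp
  | succ n ih =>
    have shift : a / q ^ (n + 1) * q = a / q ^ n := by rw [pow_succ]; field_simp
    rw [qPoch_succ', shift, ih, qPoch_succ, pow_succ_choose_two q (n + 1)]
    field_simp
    ring

end FiniteProducts

section InfiniteProducts

theorem summable_norm_mul_pow (a : ℂ) (hq : ‖q‖ < 1) : Summable fun n : ℕ => ‖a * q ^ n‖ := by
  simpa using (summable_geometric_of_lt_one (norm_nonneg q) hq).mul_left ‖a‖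

theorem multipliable_one_sub_mul_pow (a : ℂ) (hq : ‖q‖ < 1) :
    Multipliable fun n : ℕ => 1 - a * q ^ n := by
  simpa [sub_eq_add_neg] using
    multipliable_one_add_of_summable (f := fun n => -(a * q ^ n))
      (by simpa using summable_norm_mul_pow a hq)

theorem tendsto_qPoch (a : ℂ) (hq : ‖q‖ < 1) :
    Tendsto (qPoch a q) atTop (𝓝 (qPochInf a q)) :=
  (multipliable_one_sub_mul_pow a hq).hasProd.tendsto_prod_nat

@[simp]
theorem qPochInf_zero_left (q : ℂ) : qPochInf 0 q = 1 := by simp [qPochInf]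

theorem qPochInf_ne_zero (hq : ‖q‖ < 1) (ha : ∀ n : ℕ, a * q ^ n ≠ 1) : qPochInf a q ≠ 0 := by
  simpa [qPochInf, sub_eq_add_neg] using
    tprod_one_add_ne_zero_of_summable (f := fun n => -(a * q ^ n))
      (fun n => by simpa [← sub_eq_add_neg, sub_ne_zero] using (ha n).symm)
      (by simpa using summable_norm_mul_pow a hq)

theorem qPochInf_eq_qPoch_mul (a : ℂ) (hq : ‖q‖ < 1) (n : ℕ) :
    qPochInf a q = qPoch a q n * qPochInf (a * q ^ n) q := by
  refine tendsto_nhds_unique (tendsto_qPoch a hq) <| (tendsto_add_atTop_iff_nat n).1 ?_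
  simp only [add_comm _ n, qPoch_add]
  exact (tendsto_qPoch _ hq).const_mul _

theorem qPochInf_eq_one_sub_mul (a : ℂ) (hq : ‖q‖ < 1) :
    qPochInf a q = (1 - a) * qPochInf (a * q) q := by
  simpa [qPoch] using qPochInf_eq_qPoch_mul a hq 1

theorem qPochInf_mul_qPochInf_mul_base {p r : ℂ} (x : ℂ) (hp : ‖p‖ < 1) (hr : ‖r‖ < 1) :
    qPochInf x p * qPochInf (x * r) r = qPochInf (x * p) p * qPochInf x r := by
  rw [qPochInf_eq_one_sub_mul x hp, qPochInf_eq_one_sub_mul x hr]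
  ring

theorem qPochInf_eq_mul_sq (a : ℂ) (hq : ‖q‖ < 1) :
    qPochInf a q = qPochInf a (q ^ 2) * qPochInf (a * q) (q ^ 2) := by
  have hq2 := norm_pow_lt_one hq two_ne_zero
  have even := (tendsto_qPoch a hq).comp (tendsto_id.const_mul_atTop' (r := 2) two_pos)
  refine tendsto_nhds_unique even ?_
  simpa only [Function.comp_def, id, qPoch_two_mul] using
    (tendsto_qPoch a hq2).mul (tendsto_qPoch (a * q) hq2)

theorem qPochInf_mul_qPochInf_neg (a : ℂ) (hq : ‖q‖ < 1) :
    qPochInf a q * qPochInf (-a) q = qPochInf (a ^ 2) (q ^ 2) := by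
  refine tendsto_nhds_unique ?_ (tendsto_qPoch (a ^ 2) (norm_pow_lt_one hq two_ne_zero))
  simpa only [qPoch_mul_qPoch_neg] using (tendsto_qPoch a hq).mul (tendsto_qPoch (-a) hq)

theorem qPochInf_div_pow (hq₀ : q ≠ 0) (hq : ‖q‖ < 1) (ha : a ≠ 0) (n : ℕ) :
    qPochInf (a / q ^ n) q =
      (-a) ^ n / q ^ (n + 1).choose 2 * qPoch (q / a) q n * qPochInf a q := by
  rw [qPochInf_eq_qPoch_mul _ hq n, qPoch_div_pow hq₀ ha, div_mul_cancel₀ a (pow_ne_zero n hq₀)]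

end InfiniteProducts

section Bounds

theorem norm_qPoch_le {M : ℝ} (ha : ‖a‖ ≤ M) (hq : ‖q‖ < 1) (n : ℕ) :
    ‖qPoch a q n‖ ≤ Real.exp (M * (1 - ‖q‖)⁻¹) := by
  have factor_le (k : ℕ) : ‖1 - a * q ^ k‖ ≤ 1 + M * ‖q‖ ^ k := by
    calc ‖1 - a * q ^ k‖ ≤ ‖(1 : ℂ)‖ + ‖a * q ^ k‖ := norm_sub_le _ _
      _ ≤ 1 + M * ‖q‖ ^ k := by rw [norm_one, norm_mul, norm_pow]; gcongr
  have hM : 0 ≤ M := (norm_nonneg a).trans ha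
  have geom : ∑ k ∈ range n, ‖q‖ ^ k ≤ (1 - ‖q‖)⁻¹ := by
    rw [← tsum_geometric_of_lt_one (norm_nonneg q) hq]
    exact (summable_geometric_of_lt_one (norm_nonneg q) hq).sum_le_tsum _ fun _ _ => by positivity
  calc ‖qPoch a q n‖ = ∏ k ∈ range n, ‖1 - a * q ^ k‖ := norm_prod _ _
    _ ≤ ∏ k ∈ range n, (1 + M * ‖q‖ ^ k) :=
      prod_le_prod (fun _ _ => norm_nonneg _) fun k _ => factor_le k
    _ ≤ Real.exp (∑ k ∈ range n, M * ‖q‖ ^ k) :=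
      Real.prod_one_add_le_exp_sum _ fun _ => by positivity
    _ ≤ Real.exp (M * (1 - ‖q‖)⁻¹) := by rw [← mul_sum]; gcongr

theorem exists_norm_qPoch_mul_pow_le (a : ℂ) (hq : ‖q‖ < 1) {p : ℂ} (hp : ‖p‖ < 1) :
    ∃ C, ∀ k n, ‖qPoch (a * p ^ k) q n‖ ≤ C :=
  ⟨_, fun k n => norm_qPoch_le (norm_mul_pow_le a hp.le k) hq n⟩

theorem exists_norm_qPoch_inv_le (hq : ‖q‖ < 1) (ha : ∀ n : ℕ, a * q ^ n ≠ 1) :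
    ∃ C, ∀ n, ‖(qPoch a q n)⁻¹‖ ≤ C := by
  obtain ⟨C, hC⟩ := ((tendsto_qPoch a hq).inv₀ (qPochInf_ne_zero hq ha)).norm.bddAbove_range
  exact ⟨C, fun n => hC ⟨n, rfl⟩⟩

theorem exists_norm_qPoch_mul_pow_inv_le (hq : ‖q‖ < 1) (ha : ∀ n : ℕ, a * q ^ n ≠ 1) :
    ∃ C, ∀ k n, ‖(qPoch (a * q ^ k) q n)⁻¹‖ ≤ C := by
  obtain ⟨C, hC⟩ := exists_norm_qPoch_inv_le hq ha
  refine ⟨Real.exp (‖a‖ * (1 - ‖q‖)⁻¹) * C, fun k n => ?_⟩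
  have quotient : (qPoch (a * q ^ k) q n)⁻¹ = qPoch a q k * (qPoch a q (k + n))⁻¹ := by
    rw [qPoch_add, mul_inv, mul_inv_cancel_left₀ (qPoch_ne_zero ha k)]
  rw [quotient, norm_mul]
  gcongr
  · exact norm_qPoch_le le_rfl hq k
  · exact hC (k + n)

end Bounds

section Euler

/-- The `n`-th term `x ^ n q ^ (n choose 2) / (q; q)_n` of Euler's series for `(-x; q)_∞`. -/
noncomputable def eulerTerm (x q : ℂ) (n : ℕ) : ℂ := x ^ n * q ^ n.choose 2 / qPoch q q n

theorem qPoch_self_ne_zero (hq : ‖q‖ < 1) (n : ℕ) : qPoch q q n ≠ 0 :=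
  qPoch_ne_zero (mul_pow_ne_one hq hq) n

theorem exists_norm_eulerTerm_mul_pow_le (x : ℂ) (hq : ‖q‖ < 1) :
    ∃ C, ∀ k n, ‖eulerTerm (x * q ^ k) q n‖ ≤ C * (‖x‖ ^ n * ‖q‖ ^ n.choose 2) := by
  obtain ⟨C, hC⟩ := exists_norm_qPoch_inv_le hq (mul_pow_ne_one hq hq)
  refine ⟨C, fun k n => ?_⟩
  have hx : ‖x * q ^ k‖ ≤ ‖x‖ := norm_mul_pow_le x hq.le k
  calc ‖eulerTerm (x * q ^ k) q n‖
      = ‖(qPoch q q n)⁻¹‖ * (‖x * q ^ k‖ ^ n * ‖q‖ ^ n.choose 2) := by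
        rw [eulerTerm, div_eq_mul_inv, mul_comm, norm_mul, norm_mul, norm_pow, norm_pow]
    _ ≤ C * (‖x‖ ^ n * ‖q‖ ^ n.choose 2) := by
        gcongr
        · exact (norm_nonneg _).trans (hC n)
        · exact hC n

theorem summable_norm_eulerTerm (x : ℂ) (hq : ‖q‖ < 1) :
    Summable fun n => ‖eulerTerm x q n‖ := by
  obtain ⟨C, hC⟩ := exists_norm_eulerTerm_mul_pow_le x hq
  exact .of_nonneg_of_le (fun n => norm_nonneg _) (fun n => by simpa using hC 0 n)
    ((summable_pow_mul_pow_choose_two (norm_nonneg x) (norm_nonneg q) hq).mul_left C)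

theorem eulerTerm_mul_base (x q : ℂ) (n : ℕ) :
    eulerTerm (x * q) q n = q ^ n * eulerTerm x q n := by
  rw [eulerTerm, eulerTerm, mul_pow]
  ring

theorem eulerTerm_succ (x : ℂ) (hq : ‖q‖ < 1) (n : ℕ) :
    eulerTerm x q (n + 1) = eulerTerm (x * q) q (n + 1) + x * eulerTerm (x * q) q n := by
  have recurrence : (1 - q * q ^ n) * eulerTerm x q (n + 1) = x * q ^ n * eulerTerm x q n := by
    have factor_ne : 1 - q * q ^ n ≠ 0 := sub_ne_zero.2 (mul_pow_ne_one hq hq n).symm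
    rw [eulerTerm, qPoch_succ, ← div_div, mul_div_cancel₀ _ factor_ne, eulerTerm,
      pow_succ_choose_two]
    ring
  rw [eulerTerm_mul_base, eulerTerm_mul_base]
  linear_combination recurrence

theorem tsum_eulerTerm_eq_one_add_mul (x : ℂ) (hq : ‖q‖ < 1) :
    ∑' n, eulerTerm x q n = (1 + x) * ∑' n, eulerTerm (x * q) q n := by
  have hs := (summable_norm_eulerTerm x hq).of_norm
  have hs' := (summable_norm_eulerTerm (x * q) hq).of_norm
  have hs_succ := (summable_nat_add_iff 1).2 hs'
  calc ∑' n, eulerTerm x q n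
      = eulerTerm x q 0 + ∑' n, (eulerTerm (x * q) q (n + 1) + x * eulerTerm (x * q) q n) := by
        simp only [hs.tsum_eq_zero_add, eulerTerm_succ x hq]
    _ = eulerTerm (x * q) q 0 + ∑' n, eulerTerm (x * q) q (n + 1) +
          x * ∑' n, eulerTerm (x * q) q n := by
        rw [hs_succ.tsum_add (hs'.mul_left x), tsum_mul_left]
        simp only [eulerTerm, pow_zero]
        ring
    _ = (1 + x) * ∑' n, eulerTerm (x * q) q n := by
        rw [← hs'.tsum_eq_zero_add]
        ring

theorem tsum_eulerTerm_zero_left (q : ℂ) : ∑' n, eulerTerm 0 q n = 1 := by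
  rw [tsum_eq_single 0 fun n hn => by simp [eulerTerm, hn]]
  simp [eulerTerm]

theorem tsum_eulerTerm (x : ℂ) (hq : ‖q‖ < 1) : ∑' n, eulerTerm x q n = qPochInf (-x) q := by
  obtain ⟨C, hC⟩ := exists_norm_eulerTerm_mul_pow_le x hq
  have product_tendsto := tendsto_qPoch (-x) hq
  unfold qPoch at product_tendsto
  simp only [neg_mul, sub_neg_eq_add] at product_tendsto
  rw [← mul_one (qPochInf _ _), ← tsum_eulerTerm_zero_left q]
  refine tsum_eq_mul_tsum_zero_of_functional_equation (F := fun x n => eulerTerm x q n) hq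
    (fun n => ?_) hC
    ((summable_pow_mul_pow_choose_two (norm_nonneg x) (norm_nonneg q) hq).mul_left C)
    (fun k => by rw [tsum_eulerTerm_eq_one_add_mul _ hq, mul_assoc x, ← pow_succ]) product_tendsto
  unfold eulerTerm
  fun_prop

end Euler

section GaussSecond

/-- The `n`-th term `(a; q)_n (b; q)_n q ^ (n + 1 choose 2) / ((q; q)_n (abq; q²)_n)` of the
`q`-analogue, due to Andrews, of Gauss's second summation theorem. -/
noncomputable def gaussTerm (a b q : ℂ) (n : ℕ) : ℂ :=
  qPoch a q n * qPoch b q n * q ^ (n + 1).choose 2 / (qPoch q q n * qPoch (a * b * q) (q ^ 2) n)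

theorem gaussTerm_comm (a b q : ℂ) : gaussTerm a b q = gaussTerm b a q := by
  funext n
  rw [gaussTerm, gaussTerm, mul_comm (qPoch a q n), mul_comm a]

theorem gaussTerm_zero_zero (q : ℂ) : gaussTerm 0 0 q = eulerTerm q q := by
  funext n
  simp [gaussTerm, eulerTerm, pow_succ_choose_two, mul_comm]

theorem exists_norm_gaussTerm_mul_pow_le (a b : ℂ) (hq : ‖q‖ < 1)
    (hab : ∀ n : ℕ, a * b * q * (q ^ 2) ^ n ≠ 1) :
    ∃ C, ∀ k n, ‖gaussTerm (a * (q ^ 2) ^ k) b q n‖ ≤ C * (‖q‖ ^ n * ‖q‖ ^ n.choose 2) := by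
  obtain ⟨A, hA⟩ := exists_norm_qPoch_mul_pow_le a hq (norm_pow_lt_one hq two_ne_zero)
  obtain ⟨D, hD⟩ := exists_norm_qPoch_inv_le hq (mul_pow_ne_one hq hq)
  obtain ⟨E, hE⟩ := exists_norm_qPoch_mul_pow_inv_le (norm_pow_lt_one hq two_ne_zero) hab
  have hA₀ := (norm_nonneg _).trans (hA 0 0)
  have hD₀ := (norm_nonneg _).trans (hD 0)
  refine ⟨A * Real.exp (‖b‖ * (1 - ‖q‖)⁻¹) * D * E, fun k n => ?_⟩
  have denominator_base : a * (q ^ 2) ^ k * b * q = a * b * q * (q ^ 2) ^ k := by ring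
  calc ‖gaussTerm (a * (q ^ 2) ^ k) b q n‖
      = ‖qPoch (a * (q ^ 2) ^ k) q n‖ * ‖qPoch b q n‖ * ‖(qPoch q q n)⁻¹‖ *
          ‖(qPoch (a * b * q * (q ^ 2) ^ k) (q ^ 2) n)⁻¹‖ * (‖q‖ ^ n * ‖q‖ ^ n.choose 2) := by
        simp only [gaussTerm, denominator_base, pow_succ_choose_two, norm_div, norm_mul, norm_inv,
          norm_pow]
        ring
    _ ≤ _ := by
        gcongr
        exacts [hA k n, norm_qPoch_le le_rfl hq n, hD n, hE k n]

theorem summable_gaussTerm (hq : ‖q‖ < 1) (hab : ∀ n : ℕ, a * b * q * (q ^ 2) ^ n ≠ 1) :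
    Summable (gaussTerm a b q) := by
  obtain ⟨C, hC⟩ := exists_norm_gaussTerm_mul_pow_le a b hq hab
  exact .of_norm_bounded
    ((summable_pow_mul_pow_choose_two (norm_nonneg q) (norm_nonneg q) hq).mul_left C)
    fun n => by simpa using hC 0 n

/-- The certificate `G` for which `(1 - abq) gaussTerm a b q n - (1 - aq) gaussTerm (aq²) b q n` is
`G n - G (n - 1)`, so that the functional equation of the series in `a` telescopes. -/
noncomputable def gaussCertificate (a b q : ℂ) (n : ℕ) : ℂ :=
  a * (1 - a * b * q) * (qPoch (a * q) q n * qPoch b q (n + 1)) * q ^ (n + 2).choose 2 /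
    (qPoch q q n * qPoch (a * b * q) (q ^ 2) (n + 1))

theorem tendsto_gaussCertificate (hq : ‖q‖ < 1) (hab : ∀ n : ℕ, a * b * q * (q ^ 2) ^ n ≠ 1) :
    Tendsto (gaussCertificate a b q) atTop (𝓝 0) := by
  have hq2 := norm_pow_lt_one hq two_ne_zero
  have power_tendsto : Tendsto (fun n : ℕ => q ^ (n + 2).choose 2) atTop (𝓝 0) := by
    simpa using (tendsto_add_atTop_iff_nat 2).2 (tendsto_pow_mul_pow_choose_two 1 hq)
  have numerator := ((tendsto_qPoch (a * q) hq).mul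
    ((tendsto_add_atTop_iff_nat 1).2 (tendsto_qPoch b hq))).const_mul (a * (1 - a * b * q))
  have denominator := (tendsto_qPoch q hq).mul
    ((tendsto_add_atTop_iff_nat 1).2 (tendsto_qPoch (a * b * q) hq2))
  have quotient := (numerator.mul power_tendsto).div denominator
    (mul_ne_zero (qPochInf_ne_zero hq (mul_pow_ne_one hq hq)) (qPochInf_ne_zero hq2 hab))
  rwa [mul_zero, zero_div] at quotient

theorem gaussTerm_sub_zero (hab : 1 - a * b * q ≠ 0) :
    (1 - a * b * q) * gaussTerm a b q 0 - (1 - a * q) * gaussTerm (a * q ^ 2) b q 0 =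
      gaussCertificate a b q 0 := by
  have certificate_zero : gaussCertificate a b q 0 = a * q * (1 - b) := by
    simp only [gaussCertificate, qPoch_succ, qPoch_zero_right, pow_zero, mul_one, one_mul]
    rw [div_eq_iff hab]
    norm_num
    ring
  rw [certificate_zero]
  simp only [gaussTerm, qPoch_zero_right]
  norm_num
  ring

theorem gaussTerm_sub_succ (hq : ‖q‖ < 1) (hab : ∀ n : ℕ, a * b * q * (q ^ 2) ^ n ≠ 1) (n : ℕ) :
    (1 - a * b * q) * gaussTerm a b q (n + 1) -
        (1 - a * q) * gaussTerm (a * q ^ 2) b q (n + 1) =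
      gaussCertificate a b q (n + 1) - gaussCertificate a b q n := by
  have hD := qPoch_self_ne_zero hq n
  have hD₁ : 1 - q * q ^ n ≠ 0 := sub_ne_zero.2 (mul_pow_ne_one hq hq n).symm
  have hE := qPoch_ne_zero hab n
  have hE₀ : 1 - a * b * q ≠ 0 := sub_ne_zero.2 (by simpa using (hab 0).symm)
  have hE₁ : 1 - a * b * q * (q ^ 2) ^ n ≠ 0 := sub_ne_zero.2 (hab n).symm
  have hE₂ : 1 - a * b * q * (q ^ 2) ^ (n + 1) ≠ 0 := sub_ne_zero.2 (hab (n + 1)).symm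
  have numerator : (1 - a * q) * qPoch (a * q ^ 2) q (n + 1) = qPoch (a * q) q (n + 2) := by
    rw [qPoch_succ' (a * q), mul_assoc a, sq]
  have denominator : qPoch (a * q ^ 2 * b * q) (q ^ 2) (n + 1) =
      qPoch (a * b * q) (q ^ 2) (n + 2) / (1 - a * b * q) := by
    rw [qPoch_succ' (a * b * q), mul_div_cancel_left₀ _ hE₀]
    ring_nf
  simp only [gaussTerm, gaussCertificate, denominator, ← mul_div_assoc, ← mul_assoc, numerator]
  rw [qPoch_succ' a]
  simp only [qPoch_succ, pow_succ_choose_two] at hD hE ⊢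
  generalize e₁ : 1 - a * b * q * (q ^ 2) ^ n = E₁ at *
  generalize e₂ : 1 - a * b * q * (q ^ 2) ^ (n + 1) = E₂ at *
  generalize e₀ : 1 - a * b * q = E₀ at *
  generalize d₁ : 1 - q * q ^ n = D₁ at *
  field_simp
  subst e₁ e₂ e₀ d₁
  ring

theorem tsum_gaussTerm_eq_mul (hq : ‖q‖ < 1) (hab : ∀ n : ℕ, a * b * q * (q ^ 2) ^ n ≠ 1) :
    ∑' n, gaussTerm a b q n =
      (1 - a * q) / (1 - a * b * q) * ∑' n, gaussTerm (a * q ^ 2) b q n := by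
  have hab₀ : 1 - a * b * q ≠ 0 := sub_ne_zero.2 (by simpa using (hab 0).symm)
  have hab' (n : ℕ) : a * q ^ 2 * b * q * (q ^ 2) ^ n ≠ 1 := by
    convert hab (n + 1) using 1
    ring
  have hs := (summable_gaussTerm hq hab).mul_left (1 - a * b * q)
  have hs' := (summable_gaussTerm hq hab').mul_left (1 - a * q)
  have difference := tsum_eq_zero_of_telescoping (hs.sub hs') (gaussTerm_sub_zero hab₀)
    (gaussTerm_sub_succ hq hab) (tendsto_gaussCertificate hq hab)
  rw [hs.tsum_sub hs', tsum_mul_left, tsum_mul_left, sub_eq_zero] at difference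
  rw [div_mul_eq_mul_div, ← difference, mul_div_cancel_left₀ _ hab₀]

theorem continuousAt_gaussTerm_zero (b : ℂ) (hq : ‖q‖ < 1) (n : ℕ) :
    ContinuousAt (fun a => gaussTerm a b q n) 0 := by
  have numerator := (continuous_qPoch q n).continuousAt (x := 0)
  have denominator : ContinuousAt (fun a => qPoch (a * b * q) (q ^ 2) n) 0 :=
    ((continuous_qPoch (q ^ 2) n).comp (f := fun a => a * b * q) (by fun_prop)).continuousAt
  exact ((numerator.mul_const _).mul_const _).div (denominator.const_mul _)
    (mul_ne_zero (qPoch_self_ne_zero hq n) (by simp))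

theorem tsum_gaussTerm_eq_mul_zero_left (hq : ‖q‖ < 1)
    (hab : ∀ n : ℕ, a * b * q * (q ^ 2) ^ n ≠ 1) :
    ∑' n, gaussTerm a b q n =
      qPochInf (a * q) (q ^ 2) / qPochInf (a * b * q) (q ^ 2) * ∑' n, gaussTerm 0 b q n := by
  have hq2 := norm_pow_lt_one hq two_ne_zero
  obtain ⟨C, hC⟩ := exists_norm_gaussTerm_mul_pow_le a b hq hab
  have product_tendsto := (tendsto_qPoch (a * q) hq2).div (tendsto_qPoch (a * b * q) hq2)
    (qPochInf_ne_zero hq2 hab)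
  simp only [Pi.div_def, qPoch, ← prod_div_distrib] at product_tendsto
  refine tsum_eq_mul_tsum_zero_of_functional_equation hq2 (continuousAt_gaussTerm_zero b hq) hC
    ((summable_pow_mul_pow_choose_two (norm_nonneg q) (norm_nonneg q) hq).mul_left C)
    (fun k => ?_) product_tendsto
  have shifted (n : ℕ) : a * (q ^ 2) ^ k * b * q * (q ^ 2) ^ n ≠ 1 := by
    convert hab (k + n) using 1
    ring
  rw [tsum_gaussTerm_eq_mul hq shifted, pow_succ (q ^ 2), ← mul_assoc a]
  ring_nf

theorem tsum_gaussTerm (hq : ‖q‖ < 1) (hab : ∀ n : ℕ, a * b * q * (q ^ 2) ^ n ≠ 1) :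
    ∑' n, gaussTerm a b q n = qPochInf (a * q) (q ^ 2) * qPochInf (b * q) (q ^ 2) *
      qPochInf (-q) q / qPochInf (a * b * q) (q ^ 2) := by
  rw [tsum_gaussTerm_eq_mul_zero_left hq hab, gaussTerm_comm,
    tsum_gaussTerm_eq_mul_zero_left hq (by simp), gaussTerm_zero_zero, tsum_eulerTerm q hq]
  simp only [mul_zero, zero_mul, qPochInf_zero_left, div_one]
  ring

end GaussSecond

section Bailey

/-- The `n`-th term `(b; q)_n (d; q)_n c ^ n q ^ (n choose 2) / ((c; q)_n (q²; q²)_n)` of the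
`q`-analogue, due to Andrews, of Bailey's summation theorem, which requires `b * d = q`. -/
noncomputable def baileyTerm (b d c q : ℂ) (n : ℕ) : ℂ :=
  qPoch b q n * qPoch d q n * (c ^ n * q ^ n.choose 2) / (qPoch c q n * qPoch (q ^ 2) (q ^ 2) n)

theorem exists_norm_baileyTerm_mul_pow_le (b d : ℂ) (hq : ‖q‖ < 1)
    (hc : ∀ n : ℕ, c * q ^ n ≠ 1) :
    ∃ C, ∀ k n, ‖baileyTerm b d (c * (q ^ 2) ^ k) q n‖ ≤ C * (‖c‖ ^ n * ‖q‖ ^ n.choose 2) := by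
  have hq2 := norm_pow_lt_one hq two_ne_zero
  obtain ⟨D, hD⟩ := exists_norm_qPoch_inv_le hq2 (mul_pow_ne_one hq2 hq2)
  obtain ⟨E, hE⟩ := exists_norm_qPoch_mul_pow_inv_le hq hc
  have hD₀ := (norm_nonneg _).trans (hD 0)
  have hE₀ := (norm_nonneg _).trans (hE 0 0)
  refine ⟨Real.exp (‖b‖ * (1 - ‖q‖)⁻¹) * Real.exp (‖d‖ * (1 - ‖q‖)⁻¹) * E * D, fun k n => ?_⟩
  have hck : ‖c * (q ^ 2) ^ k‖ ≤ ‖c‖ := norm_mul_pow_le c hq2.le k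
  calc ‖baileyTerm b d (c * (q ^ 2) ^ k) q n‖
      = ‖qPoch b q n‖ * ‖qPoch d q n‖ * ‖(qPoch (c * q ^ (2 * k)) q n)⁻¹‖ *
          ‖(qPoch (q ^ 2) (q ^ 2) n)⁻¹‖ * (‖c * (q ^ 2) ^ k‖ ^ n * ‖q‖ ^ n.choose 2) := by
        simp only [baileyTerm, norm_div, norm_mul, norm_inv, norm_pow, pow_mul]
        ring
    _ ≤ _ := by
        gcongr
        exacts [norm_qPoch_le le_rfl hq n, norm_qPoch_le le_rfl hq n, hE _ n, hD n]

theorem summable_baileyTerm (b d : ℂ) (hq : ‖q‖ < 1) (hc : ∀ n : ℕ, c * q ^ n ≠ 1) :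
    Summable (baileyTerm b d c q) := by
  obtain ⟨C, hC⟩ := exists_norm_baileyTerm_mul_pow_le b d hq hc
  exact .of_norm_bounded
    ((summable_pow_mul_pow_choose_two (norm_nonneg c) (norm_nonneg q) hq).mul_left C)
    fun n => by simpa using hC 0 n

/-- The certificate `G` for which `(1 - c) (1 - cq) baileyTerm b d c q n -
(1 - cd) (1 - cb) baileyTerm b d (cq²) q n` is `G n - G (n - 1)` when `b * d = q`, so that the
functional equation of the series in `c` telescopes. -/
noncomputable def baileyCertificate (b d c q : ℂ) (n : ℕ) : ℂ :=
  -((1 - c) * (1 - c * q)) * (qPoch b q (n + 1) * qPoch d q (n + 1)) *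
    (c ^ (n + 1) * q ^ (n + 1).choose 2) / (qPoch c q (n + 2) * qPoch (q ^ 2) (q ^ 2) n)

theorem tendsto_baileyCertificate (b d : ℂ) (hq : ‖q‖ < 1) (hc : ∀ n : ℕ, c * q ^ n ≠ 1) :
    Tendsto (baileyCertificate b d c q) atTop (𝓝 0) := by
  have hq2 := norm_pow_lt_one hq two_ne_zero
  have power_tendsto := (tendsto_add_atTop_iff_nat 1).2 (tendsto_pow_mul_pow_choose_two c hq)
  have numerator := (((tendsto_add_atTop_iff_nat 1).2 (tendsto_qPoch b hq)).mul
    ((tendsto_add_atTop_iff_nat 1).2 (tendsto_qPoch d hq))).const_mul (-((1 - c) * (1 - c * q)))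
  have denominator := ((tendsto_add_atTop_iff_nat 2).2 (tendsto_qPoch c hq)).mul
    (tendsto_qPoch (q ^ 2) hq2)
  have quotient := (numerator.mul power_tendsto).div denominator
    (mul_ne_zero (qPochInf_ne_zero hq hc) (qPochInf_ne_zero hq2 (mul_pow_ne_one hq2 hq2)))
  rwa [mul_zero, zero_div] at quotient

theorem baileyTerm_sub_zero (hbd : b * d = q) (hc : ∀ n : ℕ, c * q ^ n ≠ 1) :
    (1 - c) * (1 - c * q) * baileyTerm b d c q 0 -
        (1 - c * d) * (1 - c * b) * baileyTerm b d (c * q ^ 2) q 0 =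
      baileyCertificate b d c q 0 := by
  have hc₀ : 1 - c ≠ 0 := sub_ne_zero.2 (by simpa using (hc 0).symm)
  have hc₁ : 1 - c * q ≠ 0 := sub_ne_zero.2 (by simpa using (hc 1).symm)
  have certificate_zero : baileyCertificate b d c q 0 = -((1 - b) * (1 - d) * c) := by
    simp only [baileyCertificate, qPoch_succ, qPoch_zero_right, pow_zero, mul_one, one_mul]
    rw [div_eq_iff (by simpa using mul_ne_zero hc₀ hc₁)]
    norm_num
    ring
  rw [certificate_zero]
  simp only [baileyTerm, qPoch_zero_right]
  norm_num
  linear_combination (c - c ^ 2) * hbd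

theorem baileyTerm_sub_succ (hq : ‖q‖ < 1) (hbd : b * d = q) (hc : ∀ n : ℕ, c * q ^ n ≠ 1)
    (n : ℕ) :
    (1 - c) * (1 - c * q) * baileyTerm b d c q (n + 1) -
        (1 - c * d) * (1 - c * b) * baileyTerm b d (c * q ^ 2) q (n + 1) =
      baileyCertificate b d c q (n + 1) - baileyCertificate b d c q n := by
  have hq2 := norm_pow_lt_one hq two_ne_zero
  have hC := qPoch_ne_zero hc n
  have hc₀ : 1 - c ≠ 0 := sub_ne_zero.2 (by simpa using (hc 0).symm)
  have hc₁ : 1 - c * q ≠ 0 := sub_ne_zero.2 (by simpa using (hc 1).symm)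
  have hC₀ : 1 - c * q ^ n ≠ 0 := sub_ne_zero.2 (hc n).symm
  have hC₁ : 1 - c * q ^ (n + 1) ≠ 0 := sub_ne_zero.2 (hc (n + 1)).symm
  have hC₂ : 1 - c * q ^ (n + 2) ≠ 0 := sub_ne_zero.2 (hc (n + 2)).symm
  have hD := qPoch_self_ne_zero hq2 n
  have hD₁ : 1 - q ^ 2 * (q ^ 2) ^ n ≠ 0 := sub_ne_zero.2 (mul_pow_ne_one hq2 hq2 n).symm
  have denominator : qPoch (c * q ^ 2) q (n + 1) =
      qPoch c q (n + 3) / ((1 - c) * (1 - c * q)) := by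
    rw [qPoch_succ' c, qPoch_succ' (c * q), ← mul_assoc,
      mul_div_cancel_left₀ _ (mul_ne_zero hc₀ hc₁), mul_assoc c, sq]
  simp only [baileyTerm, baileyCertificate, denominator, qPoch_succ, pow_succ_choose_two]
  subst hbd
  generalize e₀ : 1 - c * (b * d) ^ n = C₀ at *
  generalize e₁ : 1 - c * (b * d) ^ (n + 1) = C₁ at *
  generalize e₂ : 1 - c * (b * d) ^ (n + 2) = C₂ at *
  generalize d₁ : 1 - (b * d) ^ 2 * ((b * d) ^ 2) ^ n = D₁ at *
  generalize f₀ : 1 - c = c₀ at *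
  generalize f₁ : 1 - c * (b * d) = c₁ at *
  field_simp
  subst e₀ e₁ e₂ d₁ f₀ f₁
  ring

theorem tsum_baileyTerm_eq_mul (hq : ‖q‖ < 1) (hbd : b * d = q) (hc : ∀ n : ℕ, c * q ^ n ≠ 1) :
    ∑' n, baileyTerm b d c q n =
      (1 - c * d) * (1 - c * b) / ((1 - c) * (1 - c * q)) *
        ∑' n, baileyTerm b d (c * q ^ 2) q n := by
  have hc₀ : 1 - c ≠ 0 := sub_ne_zero.2 (by simpa using (hc 0).symm)
  have hc₁ : 1 - c * q ≠ 0 := sub_ne_zero.2 (by simpa using (hc 1).symm)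
  have hc' (n : ℕ) : c * q ^ 2 * q ^ n ≠ 1 := by
    convert hc (n + 2) using 1
    ring
  have hs := (summable_baileyTerm b d hq hc).mul_left ((1 - c) * (1 - c * q))
  have hs' := (summable_baileyTerm b d hq hc').mul_left ((1 - c * d) * (1 - c * b))
  have difference := tsum_eq_zero_of_telescoping (hs.sub hs') (baileyTerm_sub_zero hbd hc)
    (baileyTerm_sub_succ hq hbd hc) (tendsto_baileyCertificate b d hq hc)
  rw [hs.tsum_sub hs', tsum_mul_left, tsum_mul_left, sub_eq_zero] at difference
  rw [div_mul_eq_mul_div, ← difference, mul_div_cancel_left₀ _ (mul_ne_zero hc₀ hc₁)]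

theorem tsum_baileyTerm_zero (b d q : ℂ) : ∑' n, baileyTerm b d 0 q n = 1 := by
  rw [tsum_eq_single 0 fun n hn => by simp [baileyTerm, hn]]
  simp [baileyTerm]

theorem continuousAt_baileyTerm_zero (b d : ℂ) (hq : ‖q‖ < 1) (n : ℕ) :
    ContinuousAt (fun c => baileyTerm b d c q n) 0 := by
  have numerator : ContinuousAt
      (fun c => qPoch b q n * qPoch d q n * (c ^ n * q ^ n.choose 2)) 0 := by fun_prop
  have hq2 := norm_pow_lt_one hq two_ne_zero
  exact numerator.div ((continuous_qPoch q n).continuousAt.mul_const _)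
    (mul_ne_zero (by simp) (qPoch_self_ne_zero hq2 n))

theorem tsum_baileyTerm (hq : ‖q‖ < 1) (hbd : b * d = q) (hc : ∀ n : ℕ, c * q ^ n ≠ 1) :
    ∑' n, baileyTerm b d c q n =
      qPochInf (c * d) (q ^ 2) * qPochInf (c * b) (q ^ 2) / qPochInf c q := by
  have hq2 := norm_pow_lt_one hq two_ne_zero
  obtain ⟨C, hC⟩ := exists_norm_baileyTerm_mul_pow_le b d hq hc
  have product_tendsto := ((tendsto_qPoch (c * d) hq2).mul (tendsto_qPoch (c * b) hq2)).div
    ((tendsto_qPoch c hq2).mul (tendsto_qPoch (c * q) hq2))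
    (by rw [← qPochInf_eq_mul_sq c hq]; exact qPochInf_ne_zero hq hc)
  rw [← qPochInf_eq_mul_sq c hq] at product_tendsto
  simp only [Pi.div_def, qPoch, ← prod_mul_distrib, ← prod_div_distrib]
    at product_tendsto
  rw [← mul_one (_ / _), ← tsum_baileyTerm_zero b d q]
  refine tsum_eq_mul_tsum_zero_of_functional_equation (F := fun c n => baileyTerm b d c q n) hq2
    (continuousAt_baileyTerm_zero b d hq) hC
    ((summable_pow_mul_pow_choose_two (norm_nonneg c) (norm_nonneg q) hq).mul_left C)
    (fun k => ?_) product_tendsto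
  have shifted (n : ℕ) : c * (q ^ 2) ^ k * q ^ n ≠ 1 := by
    convert hc (2 * k + n) using 1
    ring
  rw [tsum_baileyTerm_eq_mul hq hbd shifted, pow_succ (q ^ 2), ← mul_assoc c]
  ring_nf

end Bailey

section JProducts

theorem J_eq_qPochInf_mul_J {m : ℕ} (hm : m ≠ 0) (hq : ‖q‖ < 1) :
    J q m = qPochInf (q ^ m) (q ^ (2 * m)) * J q (2 * m) := by
  have hqm := norm_pow_lt_one hq hm
  rw [J, qPochInf_eq_mul_sq _ hqm, ← sq, ← pow_mul, mul_comm m 2, J]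

theorem J_mul_qPochInf_neg {m : ℕ} (hm : m ≠ 0) (hq : ‖q‖ < 1) :
    J q m * qPochInf (-q ^ m) (q ^ m) = J q (2 * m) := by
  have hqm := norm_pow_lt_one hq hm
  rw [J, qPochInf_mul_qPochInf_neg _ hqm, ← pow_mul, mul_comm m 2, J]

theorem J_ne_zero {m : ℕ} (hm : m ≠ 0) (hq : ‖q‖ < 1) : J q m ≠ 0 := by
  have hqm := norm_pow_lt_one hq hm
  exact qPochInf_ne_zero hqm (mul_pow_ne_one hqm hqm)

theorem qPochInf_neg_div_qPochInf_eq_J (hq : ‖q‖ < 1) :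
    qPochInf (-q) (q ^ 2) / qPochInf q (q ^ 2) = J q 2 ^ 3 / (J q 1 ^ 2 * J q 4) := by
  have hq2 := norm_pow_lt_one hq two_ne_zero
  have hJ₁ : J q 1 = qPochInf q (q ^ 2) * J q 2 := by simpa using J_eq_qPochInf_mul_J one_ne_zero hq
  have hJ₂₄ : J q 2 = qPochInf (q ^ 2) (q ^ 4) * J q 4 := J_eq_qPochInf_mul_J two_ne_zero hq
  have opposite : qPochInf q (q ^ 2) * qPochInf (-q) (q ^ 2) = qPochInf (q ^ 2) (q ^ 4) := by
    rw [qPochInf_mul_qPochInf_neg q hq2, ← pow_mul]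
  have hne := qPochInf_ne_zero hq2 (mul_pow_ne_one hq hq2)
  rw [div_eq_div_iff hne (by simp [J_ne_zero, hq])]
  calc qPochInf (-q) (q ^ 2) * (J q 1 ^ 2 * J q 4)
      = qPochInf q (q ^ 2) * qPochInf (-q) (q ^ 2) * J q 4 * qPochInf q (q ^ 2) * J q 2 ^ 2 := by
        rw [hJ₁]; ring
    _ = J q 2 ^ 3 * qPochInf q (q ^ 2) := by rw [opposite, ← hJ₂₄]; ring

theorem qPochInf_neg_sq_div_qPochInf_eq_J (hq : ‖q‖ < 1) :
    qPochInf (-q ^ 2) (q ^ 2) ^ 2 / qPochInf (q ^ 2) (q ^ 4) = J q 4 ^ 3 / J q 2 ^ 3 := by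
  have hJ₂ : J q 2 = qPochInf (q ^ 2) (q ^ 4) * J q 4 := J_eq_qPochInf_mul_J two_ne_zero hq
  have hJ₄ : J q 2 * qPochInf (-q ^ 2) (q ^ 2) = J q 4 := J_mul_qPochInf_neg two_ne_zero hq
  have hne := left_ne_zero_of_mul (hJ₂ ▸ J_ne_zero two_ne_zero hq)
  rw [div_eq_div_iff hne (pow_ne_zero 3 (J_ne_zero two_ne_zero hq))]
  calc qPochInf (-q ^ 2) (q ^ 2) ^ 2 * J q 2 ^ 3
      = (J q 2 * qPochInf (-q ^ 2) (q ^ 2)) ^ 2 * J q 2 := by ring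
    _ = J q 4 ^ 2 * (qPochInf (q ^ 2) (q ^ 4) * J q 4) := by rw [hJ₄, ← hJ₂]
    _ = J q 4 ^ 3 * qPochInf (q ^ 2) (q ^ 4) := by ring

end JProducts

section NahmSum

/-- The quadratic form in the exponent of the Nahm sum. -/
def nahmForm (i j k l : ℕ) : ℤ :=
  (i : ℤ) ^ 2 + (j : ℤ) ^ 2 + (k : ℤ) ^ 2 + (l : ℤ) ^ 2 - (i : ℤ) * (l : ℤ) - (j : ℤ) * (l : ℤ) -
    (k : ℤ) * (l : ℤ)

/-- The summand of the Nahm sum `F(z, z⁻¹, 1, 1; q²)`. -/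
noncomputable def nahmTerm (q z : ℂ) (i j k l : ℕ) : ℂ :=
  z ^ ((i : ℤ) - (j : ℤ)) * q ^ nahmForm i j k l /
    (qPoch (q ^ 2) (q ^ 2) i * qPoch (q ^ 2) (q ^ 2) j * qPoch (q ^ 2) (q ^ 2) k *
      qPoch (q ^ 2) (q ^ 2) l)

/-- The part of the Nahm sum with fixed `l`, summed over `i`, `j` and `k` by Euler's theorem. -/
noncomputable def nahmFiberSum (q z : ℂ) (l : ℕ) : ℂ :=
  q ^ (l ^ 2) / qPoch (q ^ 2) (q ^ 2) l *
    (qPochInf (-(z * (q / q ^ l))) (q ^ 2) * (qPochInf (-(z⁻¹ * (q / q ^ l))) (q ^ 2) *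
      qPochInf (-(q / q ^ l)) (q ^ 2)))

theorem eulerTerm_mul_sq (x q : ℂ) (n : ℕ) :
    eulerTerm (x * q) (q ^ 2) n = x ^ n * q ^ n ^ 2 / qPoch (q ^ 2) (q ^ 2) n := by
  rw [eulerTerm, mul_pow, mul_assoc, ← pow_mul, ← pow_add, add_comm, two_mul_choose_two_add_self]

theorem nahmTerm_eq_eulerTerm_mul (hq : q ≠ 0) (hz : z ≠ 0) (i j k l : ℕ) :
    nahmTerm q z i j k l = q ^ (l ^ 2) / qPoch (q ^ 2) (q ^ 2) l *
      (eulerTerm (z * (q / q ^ l)) (q ^ 2) i * (eulerTerm (z⁻¹ * (q / q ^ l)) (q ^ 2) j *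
        eulerTerm (q / q ^ l) (q ^ 2) k)) := by
  have regroup (x : ℂ) : x * (q / q ^ l) = x / q ^ l * q := by ring
  have regroup_one : q / q ^ l = 1 / q ^ l * q := by ring
  rw [regroup, regroup, regroup_one]
  simp only [nahmTerm, nahmForm, eulerTerm_mul_sq, div_pow, zpow_sub₀ hz, zpow_sub₀ hq,
    zpow_add₀ hq, inv_pow, one_pow, ← Nat.cast_pow, ← Nat.cast_mul, zpow_natCast, mul_comm _ l,
    pow_mul]
  ring

-- The least eigenvalue of the quadratic form is `1 - √3 / 2`, which exceeds `1 / 8`.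
theorem sum_choose_two_le_eight_mul_nahmForm (i j k l : ℕ) :
    ((i.choose 2 + j.choose 2 + k.choose 2 + l.choose 2 : ℕ) : ℤ) ≤ 8 * nahmForm i j k l := by
  have choose_le (n : ℕ) : (n.choose 2 : ℤ) ≤ (n : ℤ) ^ 2 := by
    have := two_mul_choose_two_add_self n
    exact_mod_cast (by lia : n.choose 2 ≤ n ^ 2)
  rw [nahmForm]
  push_cast
  nlinarith [choose_le i, choose_le j, choose_le k, choose_le l, sq_nonneg (7 * (i : ℤ) - 4 * l),
    sq_nonneg (7 * (j : ℤ) - 4 * l), sq_nonneg (7 * (k : ℤ) - 4 * l), sq_nonneg (l : ℤ)]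

theorem norm_zpow_nahmForm_le {s : ℝ} (hs₀ : 0 < s) (hs₁ : s ≤ 1) (hsq : s ^ 8 = ‖q‖)
    (i j k l : ℕ) :
    ‖q ^ nahmForm i j k l‖ ≤
      s ^ i.choose 2 * (s ^ j.choose 2 * (s ^ k.choose 2 * s ^ l.choose 2)) := by
  rw [norm_zpow, ← hsq, ← zpow_natCast s 8, ← zpow_mul]
  calc _ ≤ s ^ ((i.choose 2 + j.choose 2 + k.choose 2 + l.choose 2 : ℕ) : ℤ) :=
        zpow_le_zpow_right_of_le_one₀ hs₀ hs₁ (sum_choose_two_le_eight_mul_nahmForm i j k l)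
    _ = _ := by rw [zpow_natCast]; ring

theorem summable_nahmTerm (hq₀ : q ≠ 0) (hq : ‖q‖ < 1) (hz : z ≠ 0) :
    Summable fun p : ℕ × ℕ × ℕ × ℕ => nahmTerm q z p.1 p.2.1 p.2.2.1 p.2.2.2 := by
  have hq2 := norm_pow_lt_one hq two_ne_zero
  obtain ⟨C, hC⟩ := exists_norm_qPoch_inv_le hq2 (mul_pow_ne_one hq2 hq2)
  have hC₀ := (norm_nonneg _).trans (hC 0)
  obtain ⟨s, hs₀, hsq⟩ : ∃ s : ℝ, 0 < s ∧ s ^ 8 = ‖q‖ :=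
    ⟨‖q‖ ^ ((8 : ℕ) : ℝ)⁻¹, Real.rpow_pos_of_pos (norm_pos_iff.2 hq₀) _,
      Real.rpow_inv_natCast_pow (norm_nonneg q) (by norm_num)⟩
  have hs₁ : s < 1 := (pow_lt_one_iff_of_nonneg hs₀.le (by norm_num)).1 (hsq.trans_lt hq)
  let w (x : ℂ) (n : ℕ) : ℝ := ‖x‖ ^ n * s ^ n.choose 2
  have hw (x : ℂ) : Summable (w x) := summable_pow_mul_pow_choose_two (norm_nonneg x) hs₀.le hs₁
  have hw₀ (x : ℂ) : 0 ≤ w x := fun n => by positivity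
  have majorant_kl := (hw 1).mul_of_nonneg (hw 1) (hw₀ 1) (hw₀ 1)
  have majorant_jkl := (hw z⁻¹).mul_of_nonneg majorant_kl (hw₀ z⁻¹) fun p => by positivity
  have majorant := ((hw z).mul_of_nonneg majorant_jkl (hw₀ z) fun p => by positivity).mul_left
    (C * C * C * C)
  refine .of_norm_bounded majorant fun ⟨i, j, k, l⟩ => ?_
  calc ‖nahmTerm q z i j k l‖
      = ‖(qPoch (q ^ 2) (q ^ 2) i)⁻¹‖ * ‖(qPoch (q ^ 2) (q ^ 2) j)⁻¹‖ *
          ‖(qPoch (q ^ 2) (q ^ 2) k)⁻¹‖ * ‖(qPoch (q ^ 2) (q ^ 2) l)⁻¹‖ *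
          (‖z‖ ^ i * ‖z⁻¹‖ ^ j * ‖q ^ nahmForm i j k l‖) := by
        simp only [nahmTerm, zpow_sub₀ hz, zpow_natCast, norm_div, norm_mul, norm_inv, norm_pow]
        ring
    _ ≤ C * C * C * C * (‖z‖ ^ i * ‖z⁻¹‖ ^ j *
          (s ^ i.choose 2 * (s ^ j.choose 2 * (s ^ k.choose 2 * s ^ l.choose 2)))) := by
        gcongr
        exacts [hC i, hC j, hC k, hC l, norm_zpow_nahmForm_le hs₀ hs₁.le hsq i j k l]
    _ = _ := by
        simp only [w, norm_one, one_pow]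
        ring

theorem tsum_nahmTerm_fiber (hq₀ : q ≠ 0) (hq : ‖q‖ < 1) (hz : z ≠ 0) (l : ℕ) :
    ∑' p : ℕ × ℕ × ℕ, nahmTerm q z p.1 p.2.1 p.2.2 l = nahmFiberSum q z l := by
  have hq2 := norm_pow_lt_one hq two_ne_zero
  have euler_summable (x : ℂ) := summable_norm_eulerTerm x hq2
  simp only [nahmTerm_eq_eulerTerm_mul hq₀ hz]
  rw [tsum_mul_left, ← tsum_mul_tsum_of_summable_norm (euler_summable _)
      ((euler_summable _).mul_norm (euler_summable _)),
    ← tsum_mul_tsum_of_summable_norm (euler_summable _) (euler_summable _)]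
  simp only [tsum_eulerTerm _ hq2, nahmFiberSum]

theorem hasSum_nahmFiberSum (hq₀ : q ≠ 0) (hq : ‖q‖ < 1) (hz : z ≠ 0) :
    HasSum (nahmFiberSum q z)
      (∑' p : ℕ × ℕ × ℕ × ℕ, nahmTerm q z p.1 p.2.1 p.2.2.1 p.2.2.2) := by
  let lastFirst : ℕ × ℕ × ℕ × ℕ ≃ ℕ × ℕ × ℕ × ℕ :=
    { toFun := fun (l, i, j, k) => (i, j, k, l)
      invFun := fun (i, j, k, l) => (l, i, j, k) }
  have hs := lastFirst.hasSum_iff.2 (summable_nahmTerm hq₀ hq hz).hasSum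
  refine hs.prod_fiberwise fun l => ?_
  rw [← tsum_nahmTerm_fiber hq₀ hq hz]
  exact (hs.summable.prod_factor l).hasSum

theorem nahmFiberSum_two_mul (hq₀ : q ≠ 0) (hq : ‖q‖ < 1) (hz : z ≠ 0) (m : ℕ) :
    nahmFiberSum q z (2 * m) =
      qPochInf (-q * z) (q ^ 2) * qPochInf (-q / z) (q ^ 2) * qPochInf (-q) (q ^ 2) *
        baileyTerm (-q / z) (-q * z) q (q ^ 2) m := by
  have hq2 := norm_pow_lt_one hq two_ne_zero
  have inversion {a : ℂ} (ha : a ≠ 0) := qPochInf_div_pow (pow_ne_zero 2 hq₀) hq2 ha m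
  have arg₁ : -(z * (q / q ^ (2 * m))) = (-q * z) / (q ^ 2) ^ m := by rw [pow_mul]; ring
  have arg₂ : -(z⁻¹ * (q / q ^ (2 * m))) = (-q / z) / (q ^ 2) ^ m := by rw [pow_mul]; ring
  have arg₃ : -(q / q ^ (2 * m)) = -q / (q ^ 2) ^ m := by rw [pow_mul]; ring
  have inv₁ : q ^ 2 / (-q * z) = -q / z := by field_simp
  have inv₂ : q ^ 2 / (-q / z) = -q * z := by field_simp
  have inv₃ : q ^ 2 / -q = -q := by field_simp
  have denominator : qPoch (q ^ 2) (q ^ 2) (2 * m) =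
      qPoch q (q ^ 2) m * qPoch (-q) (q ^ 2) m * qPoch ((q ^ 2) ^ 2) ((q ^ 2) ^ 2) m := by
    rw [qPoch_two_mul, qPoch_mul_qPoch_neg, sq (q ^ 2)]
  have exponent : q ^ (2 * m) ^ 2 = (q ^ m * (q ^ 2) ^ m.choose 2) ^ 4 := by
    rw [← pow_mul, ← pow_add, add_comm, two_mul_choose_two_add_self]; ring
  have cancelled_ne := qPoch_ne_zero (mul_pow_ne_one ((norm_neg q).trans_lt hq) hq2) m
  rw [nahmFiberSum, arg₁, arg₂, arg₃, inversion (by simp [hq₀, hz]), inversion (by simp [hq₀, hz]),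
    inversion (neg_ne_zero.2 hq₀), inv₁, inv₂, inv₃, denominator, exponent, baileyTerm,
    pow_succ_choose_two, ← pow_mul q 2 m, mul_comm 2 m, pow_mul q m 2]
  simp only [div_pow, mul_pow, neg_mul, neg_neg, neg_div]
  field_simp

theorem nahmFiberSum_two_mul_add_one (hq₀ : q ≠ 0) (hq : ‖q‖ < 1) (hz : z ≠ 0) (m : ℕ) :
    nahmFiberSum q z (2 * m + 1) =
      q / (1 - q ^ 2) *
        (qPochInf (-z) (q ^ 2) * qPochInf (-1 / z) (q ^ 2) * qPochInf (-1) (q ^ 2)) *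
        gaussTerm (-q ^ 2 / z) (-q ^ 2 * z) (q ^ 2) m := by
  have hq2 := norm_pow_lt_one hq two_ne_zero
  have inversion {a : ℂ} (ha : a ≠ 0) := qPochInf_div_pow (pow_ne_zero 2 hq₀) hq2 ha m
  have arg : q / q ^ (2 * m + 1) = 1 / (q ^ 2) ^ m := by
    rw [pow_succ, pow_mul]
    field_simp
  have arg₁ : -(z * (1 / (q ^ 2) ^ m)) = -z / (q ^ 2) ^ m := by ring
  have arg₂ : -(z⁻¹ * (1 / (q ^ 2) ^ m)) = (-1 / z) / (q ^ 2) ^ m := by ring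
  have arg₃ : -(1 / (q ^ 2) ^ m) = -1 / (q ^ 2) ^ m := by ring
  have inv₁ : q ^ 2 / -z = -q ^ 2 / z := by field_simp
  have inv₂ : q ^ 2 / (-1 / z) = -q ^ 2 * z := by field_simp
  have inv₃ : q ^ 2 / -1 = -q ^ 2 := by ring
  have gauss_base : -q ^ 2 / z * (-q ^ 2 * z) * q ^ 2 = q ^ 2 * q ^ 2 * q ^ 2 := by field_simp
  have denominator : qPoch (q ^ 2) (q ^ 2) (2 * m + 1) =
      (1 - q ^ 2) * (qPoch (q ^ 2) (q ^ 2) m * qPoch (-q ^ 2) (q ^ 2) m *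
        qPoch (q ^ 2 * q ^ 2 * q ^ 2) ((q ^ 2) ^ 2) m) := by
    rw [qPoch_succ', qPoch_two_mul, qPoch_mul_qPoch_neg, sq (q ^ 2)]
  have exponent : q ^ (2 * m + 1) ^ 2 = q * ((q ^ 2) ^ (m + 1).choose 2) ^ 4 := by
    rw [← pow_mul, ← pow_mul, ← pow_succ']
    congr 1
    nlinarith [two_mul_choose_two_add_self (m + 1)]
  have cancelled_ne := qPoch_ne_zero (mul_pow_ne_one ((norm_neg (q ^ 2)).trans_lt hq2) hq2) m
  rw [nahmFiberSum, arg, arg₁, arg₂, arg₃, inversion (neg_ne_zero.2 hz), inversion (by simp [hz]),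
    inversion (by simp), inv₁, inv₂, inv₃, denominator, exponent, gaussTerm, gauss_base]
  simp only [neg_neg, neg_div, one_pow, one_div, inv_pow]
  field_simp

theorem tsum_nahmFiberSum_two_mul (hq₀ : q ≠ 0) (hq : ‖q‖ < 1) (hz : z ≠ 0) :
    ∑' m, nahmFiberSum q z (2 * m) =
      J q 2 ^ 3 * (qPochInf (-q / z) (q ^ 2) * qPochInf (-q * z) (q ^ 2)) *
        (qPochInf (-q ^ 2 * z) (q ^ 4) * qPochInf (-q ^ 2 / z) (q ^ 4)) /
          (J q 1 ^ 2 * J q 4) := by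
  have hq2 := norm_pow_lt_one hq two_ne_zero
  have parameters : -q / z * (-q * z) = q ^ 2 := by field_simp
  have arg₁ : q * (-q * z) = -q ^ 2 * z := by ring
  have arg₂ : q * (-q / z) = -q ^ 2 / z := by ring
  simp only [nahmFiberSum_two_mul hq₀ hq hz]
  rw [tsum_mul_left, tsum_baileyTerm hq2 parameters (mul_pow_ne_one hq hq2), arg₁, arg₂,
    ← pow_mul]
  linear_combination (qPochInf (-q / z) (q ^ 2) * qPochInf (-q * z) (q ^ 2) *
    (qPochInf (-q ^ 2 * z) (q ^ 4) * qPochInf (-q ^ 2 / z) (q ^ 4))) *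
      qPochInf_neg_div_qPochInf_eq_J hq

theorem tsum_nahmFiberSum_two_mul_add_one (hq₀ : q ≠ 0) (hq : ‖q‖ < 1) (hz : z ≠ 0) :
    ∑' m, nahmFiberSum q z (2 * m + 1) =
      2 * q * J q 4 ^ 3 * (qPochInf (-1 / z) (q ^ 2) * qPochInf (-q ^ 2 * z) (q ^ 2)) *
        (qPochInf (-z) (q ^ 4) * qPochInf (-q ^ 4 / z) (q ^ 4)) / J q 2 ^ 3 := by
  have hq2 := norm_pow_lt_one hq two_ne_zero
  have hq4 := norm_pow_lt_one hq four_ne_zero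
  have base : -q ^ 2 / z * (-q ^ 2 * z) * q ^ 2 = q ^ 2 * q ^ 4 := by field_simp
  have base_ne (n : ℕ) : -q ^ 2 / z * (-q ^ 2 * z) * q ^ 2 * ((q ^ 2) ^ 2) ^ n ≠ 1 := by
    rw [base, ← pow_mul q 2 2, mul_assoc, ← pow_succ']
    exact mul_pow_ne_one hq2 hq4 (n + 1)
  have arg₁ : -q ^ 2 / z * q ^ 2 = -q ^ 4 / z := by ring
  have arg₂ : -q ^ 2 * z * q ^ 2 = -z * q ^ 4 := by ring
  have minus_one : qPochInf (-1) (q ^ 2) = 2 * qPochInf (-q ^ 2) (q ^ 2) := by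
    rw [qPochInf_eq_one_sub_mul _ hq2]; norm_num
  have peel : qPochInf (q ^ 2) (q ^ 4) = (1 - q ^ 2) * qPochInf (q ^ 2 * q ^ 4) (q ^ 4) :=
    qPochInf_eq_one_sub_mul _ hq4
  simp only [nahmFiberSum_two_mul_add_one hq₀ hq hz]
  rw [tsum_mul_left, tsum_gaussTerm hq2 base_ne, arg₁, arg₂, base, ← pow_mul, minus_one]
  calc _ = 2 * q * qPochInf (-1 / z) (q ^ 2) * qPochInf (-q ^ 4 / z) (q ^ 4) *
        (qPochInf (-z) (q ^ 2) * qPochInf (-z * q ^ 4) (q ^ 4)) *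
        (qPochInf (-q ^ 2) (q ^ 2) ^ 2 / qPochInf (q ^ 2) (q ^ 4)) := by
        rw [peel, ← div_div]
        ring
    _ = _ := by
      rw [qPochInf_mul_qPochInf_mul_base (-z) hq2 hq4, qPochInf_neg_sq_div_qPochInf_eq_J hq,
        neg_mul_comm, mul_comm z]
      ring

end NahmSum

theorem stmt_0 (q : ℂ) (h0 : 0 < ‖q‖) (h1 : ‖q‖ < 1) (z : ℂ) (hz : z ≠ 0) :
    (∑' p : ℕ × ℕ × ℕ × ℕ,
      (fun (i j k l : ℕ) =>
        z ^ (((i:ℤ) - (j:ℤ)) : ℤ) * q ^ (((i:ℤ)^2 + (j:ℤ)^2 + (k:ℤ)^2 + (l:ℤ)^2 - (i:ℤ)*(l:ℤ) - (j:ℤ)*(l:ℤ) - (k:ℤ)*(l:ℤ)) : ℤ) /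
          (qPoch (q ^ 2) (q ^ 2) i * qPoch (q ^ 2) (q ^ 2) j * qPoch (q ^ 2) (q ^ 2) k * qPoch (q ^ 2) (q ^ 2) l))
        p.1 p.2.1 p.2.2.1 p.2.2.2)
    = (J q 2)^3 * (qPochInf (-q/z) (q^2) * qPochInf (-q*z) (q^2)) *
        (qPochInf (-q^2*z) (q^4) * qPochInf (-q^2/z) (q^4)) / ((J q 1)^2 * J q 4)
      + 2 * q * (J q 4)^3 * (qPochInf (-1/z) (q^2) * qPochInf (-q^2*z) (q^2)) *
        (qPochInf (-z) (q^4) * qPochInf (-q^4/z) (q^4)) / (J q 2)^3 := by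
  have hq₀ : q ≠ 0 := norm_pos_iff.1 h0
  have hasSum_fibers := hasSum_nahmFiberSum hq₀ h1 hz
  have even_summable := hasSum_fibers.summable.comp_injective (mul_right_injective₀ two_ne_zero)
  have odd_summable := hasSum_fibers.summable.comp_injective
    ((add_left_injective 1).comp (mul_right_injective₀ (two_ne_zero (α := ℕ))))
  calc _ = ∑' l, nahmFiberSum q z l := hasSum_fibers.tsum_eq.symm
    _ = ∑' m, nahmFiberSum q z (2 * m) + ∑' m, nahmFiberSum q z (2 * m + 1) :=
      (tsum_even_add_odd even_summable odd_summable).symm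
    _ = _ := by
      rw [tsum_nahmFiberSum_two_mul hq₀ h1 hz, tsum_nahmFiberSum_two_mul_add_one hq₀ h1 hz]
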